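/- Let E be a Banach space and let β denote the De Blasi measure of weak noncompactness. For any bounded nonempty subset A of E, β(convexHull(A)) = β(A). -/

import Mathlib

open Metric Set Pointwise

/-- Weakly compact subset of a normed space: compact in the weak topology. -/
def IsWeaklyCompact {E : Type*} [NormedAddCommGroup E] [NormedSpace ℝ E] (C : Set E) : Prop :=
  IsCompact (toWeakSpace ℝ E '' C)

/-- De Blasi measure of weak noncompactness. -/
noncomputable def deBlasi {E : Type*} [NormedAddCommGroup E] [NormedSpace ℝ E]
    (A : Set E) : ℝ :=
  sInf {t : ℝ | 0 < t ∧ ∃ C : Set E, IsWeaklyCompact C ∧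
    A ⊆ C + t • Metric.closedBall (0 : E) 1}

open Filter Topology in
theorem ks_alaoglu {E : Type*} [NormedAddCommGroup E] [NormedSpace ℝ E]
    (f : ℕ → StrongDual ℝ E) (hf : ∀ n, ‖f n‖ ≤ 1) (V : Ultrafilter ℕ) :
    ∃ g : StrongDual ℝ E, ∀ x, Tendsto (fun n => f n x) V (𝓝 (g x)) := by
  have hc := WeakDual.isCompact_closedBall (𝕜 := ℝ) (E := E) 0 1
  obtain ⟨g, -, hg⟩ := hc.ultrafilter_le_nhds (V.map (fun n => StrongDual.toWeakDual (f n)))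
    (by
      rw [le_principal_iff]
      refine Filter.mem_map.2 (Filter.univ_mem' fun n => ?_)
      simpa using hf n)
  refine ⟨WeakDual.toStrongDual g, fun x => ?_⟩
  have h1 : Tendsto (fun n => StrongDual.toWeakDual (f n)) V (𝓝 g) := hg
  exact ((WeakDual.eval_continuous x).tendsto g).comp h1

open Filter Topology in
theorem ks_weak_cont {E : Type*} [NormedAddCommGroup E] [NormedSpace ℝ E]
    (f : StrongDual ℝ E) : Continuous (fun x : WeakSpace ℝ E => f ((toWeakSpace ℝ E).symm x)) :=
  WeakBilin.eval_continuous (topDualPairing ℝ E).flip f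

open Filter Topology in
theorem ks_subseq {E : Type*} [NormedAddCommGroup E] [NormedSpace ℝ E]
    (C : Set E) (hC : IsWeaklyCompact C)
    (f : ℕ → StrongDual ℝ E) (hf : ∀ n, ‖f n‖ ≤ 1) :
    ∃ φ : ℕ → ℕ, StrictMono φ ∧ ∃ g : StrongDual ℝ E,
      ∀ x ∈ C, Tendsto (fun k => f (φ k) x) atTop (𝓝 (g x)) := by
  classical
  set K : Set (WeakSpace ℝ E) := toWeakSpace ℝ E '' C with hK
  have hKc : IsCompact K := hC
  let ψ : WeakSpace ℝ E → (ℕ → ℝ) := fun x n => f n ((toWeakSpace ℝ E).symm x)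
  have hψ : Continuous ψ := continuous_pi fun n => ks_weak_cont (f n)
  obtain ⟨s, hs, hsd⟩ := TopologicalSpace.exists_countable_dense (ψ '' K)
  have hr : ∀ y : ψ '' K, ∃ x ∈ K, ψ x = y := fun y => y.2
  choose r hrK hrψ using hr
  set D : Set (WeakSpace ℝ E) := r '' s with hD
  have hDc : D.Countable := hs.image r
  have hDK : closure D ⊆ K := by
    refine closure_minimal ?_ hKc.isClosed
    rintro _ ⟨y, -, rfl⟩
    exact hrK y
  have hclc : IsCompact (closure D) := hKc.of_isClosed_subset isClosed_closure hDK
  have hcov : ∀ x ∈ K, ∃ y ∈ closure D, ψ y = ψ x := by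
    intro x hx
    have h1 : IsClosed (ψ '' closure D) := (hclc.image hψ).isClosed
    have h2 : (⟨ψ x, x, hx, rfl⟩ : ψ '' K) ∈ closure s := hsd _
    have h3 : ψ x ∈ closure (Subtype.val '' s) := by
      have := image_closure_subset_closure_image (s := s) continuous_subtype_val
        (Set.mem_image_of_mem _ h2)
      exact this
    have h4 : closure (Subtype.val '' s) ⊆ ψ '' closure D := by
      refine closure_minimal ?_ h1
      rintro _ ⟨y, hy, rfl⟩
      exact ⟨r y, subset_closure ⟨y, hy, rfl⟩, hrψ y⟩
    exact h4 h3
  -- diagonal subsequence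
  have hDcount : Countable D := hDc.to_subtype
  let T : ℕ → (D → ℝ) := fun n d => f n ((toWeakSpace ℝ E).symm d.1)
  have hcomp : IsCompact (Set.univ.pi fun d : D =>
      Metric.closedBall (0 : ℝ) ‖(toWeakSpace ℝ E).symm d.1‖) :=
    isCompact_univ_pi fun d => isCompact_closedBall _ _
  obtain ⟨a, -, φ, hφ, hlim⟩ := hcomp.tendsto_subseq (x := T) (by
    intro n d _
    rw [mem_closedBall_zero_iff]
    exact (f n).le_of_opNorm_le (hf n) _ |>.trans_eq (one_mul _))
  have hlimD : ∀ d (hd : d ∈ D), Tendsto (fun k => f (φ k) ((toWeakSpace ℝ E).symm d)) atTop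
      (𝓝 (a ⟨d, hd⟩)) := fun d hd => (tendsto_pi_nhds.1 hlim) ⟨d, hd⟩
  obtain ⟨g, hg⟩ := ks_alaoglu (fun k => f (φ k)) (fun k => hf _) (hyperfilter ℕ)
  have hU : (hyperfilter ℕ : Filter ℕ) ≤ atTop := by
    rw [← Nat.cofinite_eq_atTop]; exact hyperfilter_le_cofinite
  have hgD : ∀ d (hd : d ∈ D), g ((toWeakSpace ℝ E).symm d) = a ⟨d, hd⟩ := fun d hd =>
    tendsto_nhds_unique (hg _) ((hlimD d hd).mono_left hU)
  refine ⟨φ, hφ, g, fun x hx => ?_⟩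
  rw [tendsto_iff_ultrafilter]
  intro V hV
  obtain ⟨g', hg'⟩ := ks_alaoglu (fun k => f (φ k)) (fun k => hf _) V
  have hEq : ∀ y ∈ closure D, g' ((toWeakSpace ℝ E).symm y) = g ((toWeakSpace ℝ E).symm y) := by
    have hcl : IsClosed {y : WeakSpace ℝ E |
        g' ((toWeakSpace ℝ E).symm y) = g ((toWeakSpace ℝ E).symm y)} :=
      isClosed_eq (ks_weak_cont g') (ks_weak_cont g)
    have : closure D ⊆ _ := closure_minimal (t := {y : WeakSpace ℝ E |
        g' ((toWeakSpace ℝ E).symm y) = g ((toWeakSpace ℝ E).symm y)}) (fun d hd =>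
      (tendsto_nhds_unique (hg' _) ((hlimD d hd).mono_left hV)).trans (hgD d hd).symm) hcl
    exact fun y hy => this hy
  obtain ⟨y, hy, hxy⟩ := hcov (toWeakSpace ℝ E x) ⟨x, hx, rfl⟩
  have hfx : ∀ n, f n ((toWeakSpace ℝ E).symm y) = f n x := fun n => by
    have := congrFun hxy n
    simpa [ψ] using this
  have e1 : g' x = g' ((toWeakSpace ℝ E).symm y) := by
    refine tendsto_nhds_unique (hg' x) ?_
    simpa only [hfx] using hg' ((toWeakSpace ℝ E).symm y)
  have e2 : g x = g ((toWeakSpace ℝ E).symm y) := by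
    refine tendsto_nhds_unique (hg x) ?_
    simpa only [hfx] using hg ((toWeakSpace ℝ E).symm y)
  rw [e2, ← hEq y hy, ← e1]
  exact hg' x

theorem ks_ext {F : Type*} [NormedAddCommGroup F] [NormedSpace ℝ F] (p : Submodule ℝ F)
    (Φ : StrongDual ℝ F) (δ : ℝ) (hδ : 0 ≤ δ) (h : ∀ f ∈ p, ‖f‖ ≤ 1 → |Φ f| ≤ δ) :
    ∃ Ψ : StrongDual ℝ F, (∀ f ∈ p, Ψ f = Φ f) ∧ ‖Ψ‖ ≤ δ := by
  obtain ⟨Ψ, hΨ, hΨn⟩ := exists_extension_norm_eq p (Φ.comp p.subtypeL)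
  refine ⟨Ψ, fun f hf => hΨ ⟨f, hf⟩, hΨn.trans_le ?_⟩
  refine ContinuousLinearMap.opNorm_le_of_unit_norm hδ fun f hf => ?_
  exact h f f.2 (le_of_eq hf)

open Filter Topology in
/-- Helly-type lemma. -/
theorem ks_helly {E : Type*} [NormedAddCommGroup E] [NormedSpace ℝ E]
    (Φ : StrongDual ℝ (StrongDual ℝ E)) (δ : ℝ)
    (hδ : 0 ≤ δ) (hdist : ∀ x : E, δ < ‖Φ - NormedSpace.inclusionInDoubleDual ℝ E x‖)
    (s : Finset E) : ∃ f : StrongDual ℝ E, ‖f‖ ≤ 1 ∧ (∀ x ∈ s, f x = 0) ∧ δ < Φ f := by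
  by_contra hcon
  push Not at hcon
  let J := NormedSpace.inclusionInDoubleDual ℝ E
  let L : s → (StrongDual ℝ E →ₗ[ℝ] ℝ) := fun x => (J x.1).toLinearMap
  let p : Submodule ℝ (StrongDual ℝ E) := ⨅ x, LinearMap.ker (L x)
  have hp : ∀ f ∈ p, ∀ x ∈ s, f x = 0 := by
    intro f hf x hx
    have := (Submodule.mem_iInf _).1 hf ⟨x, hx⟩
    simpa [L, J] using this
  obtain ⟨Ψ, hΨ, hΨn⟩ := ks_ext p Φ δ hδ (by
    intro f hfp hf1
    have h1 := hcon f hf1 (hp f hfp)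
    have h2 := hcon (-f) (by rwa [norm_neg]) (fun x hx => by simp [hp f hfp x hx])
    rw [map_neg] at h2
    rw [abs_le]
    constructor <;> linarith)
  have hmem : (Φ - Ψ).toLinearMap ∈ Submodule.span ℝ (Set.range L) := by
    refine mem_span_of_iInf_ker_le_ker fun f hf => ?_
    have := hΨ f hf
    simp only [LinearMap.mem_ker, ContinuousLinearMap.coe_coe, sub_apply]
    rw [this, sub_self]
  obtain ⟨c, hc⟩ := (Submodule.mem_span_range_iff_exists_fun ℝ).1 hmem
  have hx : Φ - J (∑ i, c i • (i : E)) = Ψ := by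
    ext f
    have := LinearMap.congr_fun hc f
    simp [L, J] at this
    simp [J, this]
  have := hdist (∑ i, c i • (i : E))
  rw [show NormedSpace.inclusionInDoubleDual ℝ E = J from rfl, hx] at this
  linarith

open Filter Topology in
/-- Points in the convex hull are represented by normalised positive functionals. -/
theorem ks_rep {E : Type*} [NormedAddCommGroup E] [NormedSpace ℝ E]
    (C : Set E) (x : E) (hx : x ∈ convexHull ℝ C) :
    ∃ Λ : C(toWeakSpace ℝ E '' C, ℝ) →ₗ[ℝ] ℝ, (∀ h, 0 ≤ h → 0 ≤ Λ h) ∧ Λ 1 = 1 ∧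
      ∀ (f : StrongDual ℝ E) (h : C(toWeakSpace ℝ E '' C, ℝ)),
        (∀ z, h z = f ((toWeakSpace ℝ E).symm z.1)) → Λ h = f x := by
  refine convexHull_min (s := C) (t := {x | ∃ Λ : C(toWeakSpace ℝ E '' C, ℝ) →ₗ[ℝ] ℝ,
    (∀ h, 0 ≤ h → 0 ≤ Λ h) ∧ Λ 1 = 1 ∧
      ∀ (f : StrongDual ℝ E) (h : C(toWeakSpace ℝ E '' C, ℝ)),
        (∀ z, h z = f ((toWeakSpace ℝ E).symm z.1)) → Λ h = f x}) ?_ ?_ hx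
  · intro y hy
    let z : toWeakSpace ℝ E '' C := ⟨toWeakSpace ℝ E y, y, hy, rfl⟩
    refine ⟨{ toFun := fun h => h z, map_add' := fun _ _ => rfl, map_smul' := fun _ _ => rfl },
      fun h hh => hh z, rfl, fun f h hh => ?_⟩
    simpa [z] using hh z
  · rintro y ⟨Λ, h1, h2, h3⟩ y' ⟨Λ', h1', h2', h3'⟩ a b ha hb hab
    refine ⟨a • Λ + b • Λ', fun h hh => ?_, ?_, fun f h hh => ?_⟩
    · have := h1 h hh
      have := h1' h hh
      simp only [LinearMap.add_apply, LinearMap.smul_apply, smul_eq_mul]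
      positivity
    · simp [h2, h2', hab]
    · simp [h3 f h hh, h3' f h hh]

open Filter Topology MeasureTheory in
theorem ks_measure {E : Type*} [NormedAddCommGroup E] [NormedSpace ℝ E]
    (C : Set E) (hC : IsWeaklyCompact C) (x : ℕ → E) (hx : ∀ n, x n ∈ convexHull ℝ C)
    (f : ℕ → StrongDual ℝ E) (hf : ∀ n, ‖f n‖ ≤ 1) (M : ℝ) (hM : ∀ y ∈ C, ‖y‖ ≤ M)
    (g : StrongDual ℝ E) (hg : ∀ y ∈ C, Tendsto (fun k => f k y) atTop (𝓝 (g y)))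
    (δ : ℝ) (hδ : ∀ k, ∀ᶠ n in atTop, δ ≤ f k (x n)) (hg0 : ∀ n, g (x n) = 0) : δ ≤ 0 := by
  let K : Set (WeakSpace ℝ E) := toWeakSpace ℝ E '' C
  have hKc : IsCompact K := hC
  have : CompactSpace K := isCompact_iff_compactSpace.1 hKc
  let _ : MeasurableSpace K := borel K
  have : BorelSpace K := ⟨rfl⟩
  choose Λ hpos hone hrep using fun n => ks_rep C (x n) (hx n)
  let U := hyperfilter ℕ
  have hU : (U : Filter ℕ) ≤ atTop := by
    rw [← Nat.cofinite_eq_atTop]; exact hyperfilter_le_cofinite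
  have hmono : ∀ n (h h' : C(K, ℝ)), h ≤ h' → Λ n h ≤ Λ n h' := by
    intro n h h' hh
    have := hpos n (h' - h) (sub_nonneg.2 hh)
    rw [map_sub] at this
    linarith
  have hbd : ∀ (h : C(K, ℝ)) n, Λ n h ∈ Set.Icc (-‖h‖) ‖h‖ := by
    intro h n
    have e : ∀ c : ℝ, Λ n (c • (1 : C(K, ℝ))) = c := fun c => by
      rw [map_smul, hone n, smul_eq_mul, mul_one]
    constructor
    · rw [← e (-‖h‖)]
      exact hmono n _ _ fun z => by
        simpa using (abs_le.1 (h.norm_coe_le_norm z)).1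
    · rw [← e ‖h‖]
      exact hmono n _ _ fun z => by
        simpa using (abs_le.1 (h.norm_coe_le_norm z)).2
  have hlim : ∀ h : C(K, ℝ), ∃ l : ℝ, Tendsto (fun n => Λ n h) U (𝓝 l) := by
    intro h
    obtain ⟨l, -, hl⟩ := (isCompact_Icc (a := -‖h‖) (b := ‖h‖)).ultrafilter_le_nhds
      (U.map fun n => Λ n h) (by
        rw [le_principal_iff]
        exact Filter.mem_map.2 (Filter.univ_mem' fun n => hbd h n))
    exact ⟨l, hl⟩
  choose L hL using hlim
  let Lp : CompactlySupportedContinuousMap K ℝ →ₚ[ℝ] ℝ :=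
    { toFun := fun h => L h.toContinuousMap
      map_add' := fun h h' => by
        refine tendsto_nhds_unique (hL _) ?_
        refine ((hL h.toContinuousMap).add (hL h'.toContinuousMap)).congr fun n => ?_
        rw [← map_add]; rfl
      map_smul' := fun c h => by
        refine tendsto_nhds_unique (hL _) ?_
        refine ((hL h.toContinuousMap).const_mul c).congr fun n => ?_
        rw [← smul_eq_mul, ← map_smul]; rfl
      monotone' := fun h h' hh => by
        refine le_of_tendsto_of_tendsto' (hL _) (hL _) fun n => hmono n _ _ fun z => hh z }
  let μ := RealRMK.rieszMeasure Lp
  have : IsFiniteMeasureOnCompacts μ := by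
    dsimp only [μ]; unfold RealRMK.rieszMeasure; infer_instance
  have : IsFiniteMeasure μ := ⟨isCompact_univ.measure_lt_top⟩
  let res : StrongDual ℝ E → C(K, ℝ) := fun f =>
    ⟨fun z => f ((toWeakSpace ℝ E).symm z.1), (ks_weak_cont f).comp continuous_subtype_val⟩
  have hint : ∀ f : StrongDual ℝ E, ∫ z, res f z ∂μ = L (res f) := fun f =>
    RealRMK.integral_rieszMeasure Lp
      (CompactlySupportedContinuousMap.continuousMapEquiv (res f))
  have hLres : ∀ f : StrongDual ℝ E, Tendsto (fun n => f (x n)) U (𝓝 (L (res f))) := fun f =>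
    (hL (res f)).congr fun n => hrep n f (res f) fun z => rfl
  have h1 : ∀ k, δ ≤ ∫ z, res (f k) z ∂μ := fun k => by
    rw [hint]
    exact ge_of_tendsto (hLres (f k)) (hU (hδ k))
  have h2 : ∫ z, res g z ∂μ = 0 := by
    rw [hint]
    refine tendsto_nhds_unique (hLres g) ?_
    simpa only [hg0] using tendsto_const_nhds
  have h3 : Tendsto (fun k => ∫ z, res (f k) z ∂μ) atTop (𝓝 (∫ z, res g z ∂μ)) := by
    refine tendsto_integral_of_dominated_convergence (fun _ => M)
      (fun k => (res (f k)).continuous.aestronglyMeasurable) (integrable_const M) ?_ ?_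
    · intro k
      refine Eventually.of_forall ?_
      rintro ⟨_, y, hy, rfl⟩
      have : ‖f k y‖ ≤ M := ((f k).le_of_opNorm_le (hf k) y).trans (by
        rw [one_mul]; exact hM y hy)
      simpa [res] using this
    · refine Eventually.of_forall ?_
      rintro ⟨_, y, hy, rfl⟩
      simpa [res] using hg y hy
  rw [h2] at h3
  exact ge_of_tendsto' h3 h1

open Filter Topology in
theorem ks_bounded {E : Type*} [NormedAddCommGroup E] [NormedSpace ℝ E]
    (C : Set E) (hC : IsWeaklyCompact C) : ∃ M : ℝ, ∀ y ∈ C, ‖y‖ ≤ M := by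
  obtain ⟨M, hM⟩ := banach_steinhaus
    (g := fun y : C => NormedSpace.inclusionInDoubleDual ℝ E y.1) (fun f => by
      obtain ⟨c, hc⟩ := (IsCompact.image hC (ks_weak_cont f)).isBounded.exists_norm_le
      refine ⟨c, fun y => hc _ ⟨_, ⟨y.1, y.2, rfl⟩, ?_⟩⟩
      simp)
  refine ⟨M, fun y hy => ?_⟩
  have := hM ⟨y, hy⟩
  exact ((NormedSpace.inclusionInDoubleDualLi (E := E) ℝ).norm_map y).symm.le.trans this

open Filter Topology in
/-- Krein–Šmulian theorem. -/
theorem ks_main {E : Type*} [NormedAddCommGroup E] [NormedSpace ℝ E] [CompleteSpace E]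
    (C : Set E) (hC : IsWeaklyCompact C) :
    ∃ C' : Set E, IsWeaklyCompact C' ∧ convexHull ℝ C ⊆ C' := by
  obtain ⟨M, hM⟩ := ks_bounded C hC
  let S : Set (WeakSpace ℝ E) := toWeakSpace ℝ E '' convexHull ℝ C
  suffices h : IsCompact (closure S) by
    refine ⟨(toWeakSpace ℝ E) ⁻¹' closure S, ?_, fun x hx => ?_⟩
    swap
    · have h0 : toWeakSpace ℝ E x ∈ closure S := subset_closure (Set.mem_image_of_mem _ hx)
      exact h0
    unfold IsWeaklyCompact
    rwa [Set.image_preimage_eq _ (toWeakSpace ℝ E).surjective]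
  refine NormedSpace.isCompact_closure_of_isBounded ℝ E S ?_ ?_
  · rw [Set.preimage_image_eq _ (toWeakSpace ℝ E).injective, isBounded_convexHull]
    exact isBounded_iff_forall_norm_le.2 ⟨M, hM⟩
  intro Φ' hΦ'
  by_contra hnot
  let Φ : StrongDual ℝ (StrongDual ℝ E) := WeakDual.toStrongDual Φ'
  let J := NormedSpace.inclusionInDoubleDual ℝ E
  have hcl : IsClosed (Set.range J) := by
    have h := (NormedSpace.inclusionInDoubleDualLi (E := E) ℝ).isometry.isUniformInducing
    exact h.isComplete_range.isClosed
  have hΦ : Φ ∉ Set.range J := by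
    rintro ⟨x, hx⟩
    exact hnot ⟨toWeakSpace ℝ E x, congrArg StrongDual.toWeakDual hx⟩
  obtain ⟨ε, hε, hball⟩ := Metric.isOpen_iff.1 hcl.isOpen_compl Φ hΦ
  let δ := ε / 2
  have hδ : 0 < δ := half_pos hε
  have hdist : ∀ x : E, δ < ‖Φ - J x‖ := by
    intro x
    by_contra hcon
    refine hball (show J x ∈ Metric.ball Φ ε from ?_) ⟨x, rfl⟩
    rw [Metric.mem_ball, dist_comm]
    have h1 : dist Φ (J x) = ‖Φ - J x‖ := dist_eq_norm (E := StrongDual ℝ (StrongDual ℝ E)) Φ (J x)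
    have h2 : δ < ε := half_lt_self hε
    exact h1.trans_lt ((not_lt.1 hcon).trans_lt h2)
  -- approximation
  have happ : ∀ F : Finset (StrongDual ℝ E), (∀ f ∈ F, δ < Φ f) →
      ∃ x ∈ convexHull ℝ C, ∀ f ∈ F, δ < f x := by
    intro F hF
    have ho : IsOpen (⋂ f ∈ F, {G : WeakDual ℝ (StrongDual ℝ E) | δ < G f}) :=
      isOpen_biInter_finset fun f _ => isOpen_lt continuous_const (WeakDual.eval_continuous f)
    obtain ⟨_, h1, _, ⟨x, hx, rfl⟩, rfl⟩ := mem_closure_iff.1 hΦ' _ ho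
      (Set.mem_iInter₂.2 fun f hf => hF f hf)
    refine ⟨x, hx, fun f hf => ?_⟩
    exact Set.mem_iInter₂.1 h1 f hf
  classical
  obtain ⟨q, hq, hqr⟩ := exists_seq_of_forall_finset_exists
    (α := E × StrongDual ℝ E)
    (fun p => p.1 ∈ convexHull ℝ C ∧ ‖p.2‖ ≤ 1 ∧ δ < Φ p.2)
    (fun p p' => p'.2 p.1 = 0 ∧ δ < p.2 p'.1) (by
      intro s hs
      obtain ⟨f, hf1, hf0, hfδ⟩ := ks_helly Φ δ hδ.le hdist (s.image Prod.fst)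
      obtain ⟨x, hx, hxδ⟩ := happ (s.image Prod.snd) (by
        intro f hf
        obtain ⟨p, hp, rfl⟩ := Finset.mem_image.1 hf
        exact (hs p hp).2.2)
      exact ⟨(x, f), ⟨hx, hf1, hfδ⟩, fun p hp => ⟨hf0 _ (Finset.mem_image_of_mem _ hp),
        hxδ _ (Finset.mem_image_of_mem _ hp)⟩⟩)
  obtain ⟨φ, hφ, g, hg⟩ := ks_subseq C hC (fun n => (q n).2) (fun n => (hq n).2.1)
  have hgc : ∀ x ∈ convexHull ℝ C, Tendsto (fun k => (q (φ k)).2 x) atTop (𝓝 (g x)) := by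
    intro x hx
    refine convexHull_min (t := {x | Tendsto (fun k => (q (φ k)).2 x) atTop (𝓝 (g x))})
      hg ?_ hx
    intro y hy z hz a b _ _ _
    have := (hy.const_mul a).add (hz.const_mul b)
    simpa using this
  have := ks_measure C hC (fun n => (q n).1) (fun n => (hq n).1) (fun k => (q (φ k)).2)
    (fun k => (hq _).2.1) M hM g hg δ
    (fun k => (eventually_gt_atTop (φ k)).mono fun n hn => (hqr _ _ hn).2.le)
    (fun n => by
      refine tendsto_nhds_unique (hgc _ (hq n).1) ?_
      refine tendsto_const_nhds.congr' ?_
      filter_upwards [hφ.tendsto_atTop.eventually_gt_atTop n] with k hk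
      exact (hqr _ _ hk).1.symm)
  linarith

theorem deBlasi_convexHull {E : Type*} [NormedAddCommGroup E] [NormedSpace ℝ E]
    [CompleteSpace E] (A : Set E) (hA : A.Nonempty) (hAb : Bornology.IsBounded A) :
    deBlasi (convexHull ℝ A) = deBlasi A := by
  unfold deBlasi
  congr 1
  ext t
  constructor
  · rintro ⟨ht, C, hC, hsub⟩
    exact ⟨ht, C, hC, (subset_convexHull ℝ A).trans hsub⟩
  · rintro ⟨ht, C, hC, hsub⟩
    obtain ⟨C', hC', hsub'⟩ := ks_main C hC
    refine ⟨ht, C', hC', (convexHull_mono hsub).trans ?_⟩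
    rw [convexHull_add, ((convex_closedBall (0 : E) 1).smul t).convexHull_eq]
    exact Set.add_subset_add_right hsub'
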